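/- arXiv:1804.03254 — 3 statements merged into one kernel-verified Lean document; each statement's English description precedes it below -/
import Mathlib

section
/- Let f ∈ ℱ, k ≥ 1, s ∈ 𝒮_{f,k}, and let A ⊆ 𝒯_{f,k+1} be a set such that every ν ∈ A satisfies ν↾k ∈ s, and such that for every ρ ∈ s ∩ 𝒯_{f,k} there is some ℓ ≤ f(k) with ρ⌢⟨ℓ⟩ ∉ A. Then there exists s' ∈ 𝒮_{f,k+1} with s ∪ A ⊆ s'. In particular (taking A = ∅), every s ∈ 𝒮_{f,k} extends to some s' ∈ 𝒮_{f,k+1}. -/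
/-- `η ∈ 𝒯_f` : a finite sequence with `η(ℓ) ≤ f(ℓ)` for all `ℓ < lg(η)`. -/
def inT (f : ℕ → ℕ) (η : List ℕ) : Prop := ∀ i : Fin η.length, η.get i ≤ f i

/-- `𝒯_{f,k}` : elements of `𝒯_f` of length exactly `k`. -/
def Tk (f : ℕ → ℕ) (k : ℕ) : Set (List ℕ) := {η | η.length = k ∧ inT f η}

/-- `𝒯_{f,[k]}` : elements of `𝒯_f` of length at most `k`. -/
def Tle (f : ℕ → ℕ) (k : ℕ) : Set (List ℕ) := {η | η.length ≤ k ∧ inT f η}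

/-- `𝒯_f = ⋃_k 𝒯_{f,k}`. -/
def Tf (f : ℕ → ℕ) : Set (List ℕ) := {η | inT f η}

/-- The conditions on `s ⊆ 𝒯_{f,[k]}` prior to maximality: nonempty, closed
under initial segment, every `⊴`-maximal node is in `𝒯_{f,k}`, and `s`
contains no full splitting `{ρ⌢⟨ℓ⟩ : ℓ ≤ f(lg ρ)}`. -/
def SBase (f : ℕ → ℕ) (k : ℕ) (s : Set (List ℕ)) : Prop :=
  s ⊆ Tle f k ∧ s.Nonempty ∧
  (∀ η ∈ s, ∀ ρ : List ℕ, ρ <+: η → ρ ∈ s) ∧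
  (∀ ρ ∈ s, (∀ η ∈ s, ρ <+: η → η = ρ) → ρ.length = k) ∧
  (∀ ρ ∈ Tle f k, ¬ ∀ ℓ ≤ f ρ.length, ρ ++ [ℓ] ∈ s)

/-- `𝒮_{f,k}` : the `k`-maximal subsets of `𝒯_{f,[k]}`, i.e. those satisfying
`SBase` and maximal under inclusion subject to it. -/
def Sk (f : ℕ → ℕ) (k : ℕ) : Set (Set (List ℕ)) :=
  {s | SBase f k s ∧ ∀ s', SBase f k s' → s ⊆ s' → s' = s}

/-- `𝒮_f = ⋃_{k ≥ 1} 𝒮_{f,k}`. -/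
def Sf (f : ℕ → ℕ) : Set (Set (List ℕ)) := {s | ∃ k, 1 ≤ k ∧ s ∈ Sk f k}

/-- The restriction `η ↾ k = ⟨η 0, …, η (k-1)⟩` of `η : ℕ → ℕ`. -/
def restr (η : ℕ → ℕ) (k : ℕ) : List ℕ := List.map η (List.range k)

/-- `lim(𝒯_f)` : branches of `𝒯_f`. -/
def limT (f : ℕ → ℕ) : Set (ℕ → ℕ) := {η | ∀ k, restr η k ∈ Tk f k}

/-- `lim(𝒮_f)` : sequences `⟨s_k : 1 ≤ k < ω⟩` with `s_k ∈ 𝒮_{f,k}`,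
increasing under inclusion (the value at `0` is irrelevant). -/
def limS (f : ℕ → ℕ) : Set (ℕ → Set (List ℕ)) :=
  {ν | (∀ k, 1 ≤ k → ν k ∈ Sk f k) ∧ ∀ k k', 1 ≤ k → k < k' → ν k ⊆ ν k'}

/-!
Each node `ρ ∈ s` of length `k` has an immediate successor outside `A`; choose one, `ρ⌢⟨c ρ⟩`, and
let `s'` be `s` together with all other immediate successors of its nodes of length `k`. Exactly
one successor of each such node is omitted, so nothing can be added to `s'` at level `k + 1`.
Nothing can be added below either: the nodes of length at most `k` of a competitor `t ⊇ s'` satisfy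
the conditions at level `k`, so they form `s` by maximality of `s`.
-/

section

variable {α : Type*} {s : Set (List α)} {ρ : List α}

theorem prefix_closed_iff :
    (∀ η ∈ s, ∀ ρ : List α, ρ <+: η → ρ ∈ s) ↔ ∀ ρ m, ρ ++ [m] ∈ s → ρ ∈ s := by
  refine ⟨fun h ρ m hρ => h _ hρ ρ (List.prefix_append _ _), fun h η => ?_⟩
  induction η using List.reverseRecOn with
  | nil =>
    intro hη ρ hρ
    rwa [List.prefix_nil.1 hρ]
  | append_singleton η m ih =>
    intro hη ρ hρ
    rcases List.prefix_concat_iff.1 hρ with rfl | hρ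
    · exact hη
    · exact ih (h η m hη) ρ hρ

theorem maximal_iff_no_append_singleton_mem (hs : ∀ η ∈ s, ∀ ρ : List α, ρ <+: η → ρ ∈ s) :
    (∀ η ∈ s, ρ <+: η → η = ρ) ↔ ∀ m, ρ ++ [m] ∉ s := by
  constructor
  · intro hmax m hm
    simpa using hmax _ hm (List.prefix_append _ _)
  · rintro hno η hη ⟨τ, rfl⟩
    cases τ with
    | nil => exact List.append_nil ρ
    | cons m τ => exact absurd (hs _ hη _ ⟨τ, by simp⟩) (hno m)

end

section

variable {f : ℕ → ℕ} {k n m : ℕ} {s t A : Set (List ℕ)} {c : List ℕ → ℕ} {ρ : List ℕ}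

theorem inT_append_singleton : inT f (ρ ++ [m]) ↔ inT f ρ ∧ m ≤ f ρ.length := by
  simp only [inT, Fin.forall_iff, List.get_eq_getElem, List.length_append, List.length_singleton]
  constructor
  · intro h
    refine ⟨fun i hi => ?_, by simpa using h ρ.length ρ.length.lt_succ_self⟩
    simpa [List.getElem_append_left hi] using h i (hi.trans ρ.length.lt_succ_self)
  · rintro ⟨hρ, hm⟩ i hi
    rcases Nat.lt_succ_iff_lt_or_eq.1 hi with hlt | rfl
    · simpa [List.getElem_append_left hlt] using hρ i hlt
    · simpa using hm

theorem append_singleton_mem_Tk_succ : ρ ++ [m] ∈ Tk f (k + 1) ↔ ρ ∈ Tk f k ∧ m ≤ f k := by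
  simp only [Tk, Set.mem_ofPred_eq, List.length_append, List.length_singleton,
    Nat.add_right_cancel_iff, inT_append_singleton, and_assoc]
  exact and_congr_right fun hρ => by rw [hρ]

theorem sBase_iff :
    SBase f k s ↔ s ⊆ Tle f k ∧ s.Nonempty ∧ (∀ ρ m, ρ ++ [m] ∈ s → ρ ∈ s) ∧
      ∀ ρ ∈ s, ρ.length < k → (∃ m, ρ ++ [m] ∈ s) ∧ ∃ m ≤ f ρ.length, ρ ++ [m] ∉ s := by
  rw [SBase, prefix_closed_iff]
  refine and_congr_right fun hT => and_congr_right fun _ => and_congr_right fun hclosed => ?_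
  simp only [maximal_iff_no_append_singleton_mem (prefix_closed_iff.2 hclosed)]
  constructor
  · rintro ⟨hmax, hfree⟩ ρ hρ hlt
    have hsucc : ∃ m, ρ ++ [m] ∈ s := by
      by_contra! hno
      exact hlt.ne (hmax ρ hρ hno)
    exact ⟨hsucc, by simpa using hfree ρ (hT hρ)⟩
  · refine fun h => ⟨fun ρ hρ hno => ?_, fun ρ _ hall => ?_⟩
    · by_contra hne
      obtain ⟨m, hm⟩ := (h ρ hρ (lt_of_le_of_ne (hT hρ).1 hne)).1
      exact hno m hm
    · have h0 := hall 0 (Nat.zero_le _)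
      have hlt : ρ.length < k := by simpa using (hT h0).1
      obtain ⟨m, hm, hms⟩ := (h ρ (hclosed ρ 0 h0) hlt).2
      exact hms (hall m hm)

theorem SBase.mem_of_prefix {η : List ℕ} (hs : SBase f k s) (hη : η ∈ s) (hρ : ρ <+: η) :
    ρ ∈ s :=
  hs.2.2.1 η hη ρ hρ

theorem SBase.truncate (ht : SBase f n t) (hkn : k ≤ n) :
    SBase f k {η ∈ t | η.length ≤ k} := by
  obtain ⟨hT, ⟨η, hη⟩, hclosed, hsplit⟩ := sBase_iff.1 ht
  refine sBase_iff.2 ⟨fun η hη => ⟨hη.2, (hT hη.1).2⟩,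
    ⟨[], ht.mem_of_prefix hη List.nil_prefix, Nat.zero_le k⟩,
    fun ρ m hρ => ⟨hclosed ρ m hρ.1, ?_⟩, ?_⟩
  · have : ρ.length + 1 ≤ k := by simpa using hρ.2
    omega
  · rintro ρ ⟨hρ, -⟩ hlt
    obtain ⟨⟨m, hm⟩, l, hl, hlρ⟩ := hsplit ρ hρ (hlt.trans_le hkn)
    exact ⟨⟨m, hm, by simpa using hlt⟩, l, hl, fun h => hlρ h.1⟩

theorem truncate_eq_of_mem_Sk (hs : s ∈ Sk f k) (ht : SBase f n t) (hkn : k ≤ n) (hst : s ⊆ t) :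
    {η ∈ t | η.length ≤ k} = s :=
  hs.2 _ (ht.truncate hkn) fun _ hη => ⟨hst hη, (hs.1.1 hη).1⟩

/-- The one-level extension of a tree `s` of height `k`: every node `ρ ∈ s` of length `k` receives
all its immediate successors except `ρ⌢⟨c ρ⟩`. The values of `c` elsewhere are irrelevant. -/
def extendOmitting (f : ℕ → ℕ) (k : ℕ) (s : Set (List ℕ)) (c : List ℕ → ℕ) : Set (List ℕ) :=
  s ∪ {η | ∃ ρ ∈ s, ρ.length = k ∧ ∃ m ≤ f k, m ≠ c ρ ∧ η = ρ ++ [m]}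

theorem subset_extendOmitting : s ⊆ extendOmitting f k s c :=
  Set.subset_union_left

theorem append_singleton_mem_extendOmitting :
    ρ ++ [m] ∈ extendOmitting f k s c ↔
      ρ ++ [m] ∈ s ∨ ρ ∈ s ∧ ρ.length = k ∧ m ≤ f k ∧ m ≠ c ρ := by
  refine or_congr_right ⟨?_, fun ⟨hρ, hlen, hm, hmc⟩ => ⟨ρ, hρ, hlen, m, hm, hmc, rfl⟩⟩
  rintro ⟨τ, hτ, hlen, l, hl, hlc, heq⟩
  obtain ⟨rfl, rfl⟩ := List.append_singleton_inj.1 heq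
  exact ⟨hτ, hlen, hl, hlc⟩

theorem append_singleton_mem_extendOmitting_of_length_eq (hs : s ⊆ Tle f k) (hρ : ρ ∈ s)
    (hlen : ρ.length = k) : ρ ++ [m] ∈ extendOmitting f k s c ↔ m ≤ f k ∧ m ≠ c ρ := by
  have hm : ρ ++ [m] ∉ s := fun h => by simpa [hlen] using (hs h).1
  simp [append_singleton_mem_extendOmitting, hm, hρ, hlen]

theorem append_singleton_mem_extendOmitting_of_length_lt (hlt : ρ.length < k) :
    ρ ++ [m] ∈ extendOmitting f k s c ↔ ρ ++ [m] ∈ s := by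
  simp [append_singleton_mem_extendOmitting, hlt.ne]

theorem extendOmitting_subset_Tle (hs : s ⊆ Tle f k) :
    extendOmitting f k s c ⊆ Tle f (k + 1) := by
  rintro η (hη | ⟨ρ, hρ, hlen, m, hm, -, rfl⟩)
  · exact ⟨(hs hη).1.trans k.le_succ, (hs hη).2⟩
  · have hTk := append_singleton_mem_Tk_succ.2 ⟨⟨hlen, (hs hρ).2⟩, hm⟩
    exact ⟨hTk.1.le, hTk.2⟩

theorem mem_of_mem_extendOmitting_of_length_le (hρ : ρ ∈ extendOmitting f k s c)
    (hle : ρ.length ≤ k) : ρ ∈ s := by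
  rcases hρ with hρ | ⟨τ, -, hlen, m, -, -, rfl⟩
  · exact hρ
  · simp [hlen] at hle

theorem sBase_extendOmitting (hs : SBase f k s) (hfk : 0 < f k)
    (hc : ∀ ρ ∈ s, ρ.length = k → c ρ ≤ f k) : SBase f (k + 1) (extendOmitting f k s c) := by
  obtain ⟨hT, hne, hclosed, hsplit⟩ := sBase_iff.1 hs
  refine sBase_iff.2 ⟨extendOmitting_subset_Tle hT, hne.mono subset_extendOmitting, ?_, ?_⟩
  · intro ρ m hρ
    rcases append_singleton_mem_extendOmitting.1 hρ with h | h
    · exact subset_extendOmitting (hclosed ρ m h)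
    · exact subset_extendOmitting h.1
  · intro ρ hρ hlt
    have hρs := mem_of_mem_extendOmitting_of_length_le hρ (Nat.le_of_lt_succ hlt)
    rcases Nat.lt_succ_iff_lt_or_eq.1 hlt with hlt | hlen
    · simpa only [append_singleton_mem_extendOmitting_of_length_lt hlt] using hsplit ρ hρs hlt
    · simp only [append_singleton_mem_extendOmitting_of_length_eq hT hρs hlen, hlen]
      refine ⟨?_, c ρ, hc ρ hρs hlen, fun h => h.2 rfl⟩
      rcases eq_or_ne (c ρ) 0 with h0 | h0
      · exact ⟨1, hfk, by simp [h0]⟩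
      · exact ⟨0, Nat.zero_le _, h0.symm⟩

theorem subset_extendOmitting_of_avoids (hA : A ⊆ Tk f (k + 1)) (hAs : ∀ ν ∈ A, ν.take k ∈ s)
    (hc : ∀ ρ ∈ s, ρ.length = k → ρ ++ [c ρ] ∉ A) : A ⊆ extendOmitting f k s c := by
  intro ν hν
  obtain rfl | ⟨ρ, m, rfl⟩ := List.eq_nil_or_concat' ν
  · exact absurd (hA hν).1 (by simp)
  obtain ⟨⟨hlen, -⟩, hm⟩ := append_singleton_mem_Tk_succ.1 (hA hν)
  have hρ : ρ ∈ s := by simpa [← hlen] using hAs _ hν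
  refine append_singleton_mem_extendOmitting.2 (.inr ⟨hρ, hlen, hm, ?_⟩)
  rintro rfl
  exact hc ρ hρ hlen hν

theorem eq_extendOmitting_of_subset (hs : s ∈ Sk f k) (ht : SBase f (k + 1) t)
    (hst : extendOmitting f k s c ⊆ t) : t = extendOmitting f k s c := by
  have htrunc := truncate_eq_of_mem_Sk hs ht k.le_succ (subset_extendOmitting.trans hst)
  obtain ⟨hT, -, hclosed, hsplit⟩ := sBase_iff.1 ht
  have hTk : {η ∈ t | k < η.length} ⊆ Tk f (k + 1) := fun η hη =>
    ⟨le_antisymm (hT hη.1).1 hη.2, (hT hη.1).2⟩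
  have htop : {η ∈ t | k < η.length} ⊆ extendOmitting f k s c := by
    refine subset_extendOmitting_of_avoids hTk (fun ν hν => ?_) fun ρ hρ hlen hmem => ?_
    · rw [← htrunc]
      exact ⟨ht.mem_of_prefix hν.1 (List.take_prefix k ν), List.length_take_le k ν⟩
    · obtain ⟨m, hm, hmt⟩ := (hsplit ρ (hclosed ρ _ hmem.1) (by omega)).2
      have hmc : m ≠ c ρ := fun h => hmt (h ▸ hmem.1)
      exact hmt (hst (append_singleton_mem_extendOmitting.2
        (.inr ⟨hρ, hlen, hlen ▸ hm, hmc⟩)))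
  refine Set.Subset.antisymm (fun η hη => ?_) hst
  rcases le_or_gt η.length k with hle | hgt
  · exact subset_extendOmitting (htrunc.subset ⟨hη, hle⟩)
  · exact htop ⟨hη, hgt⟩

theorem extendOmitting_mem_Sk (hs : s ∈ Sk f k) (hfk : 0 < f k)
    (hc : ∀ ρ ∈ s, ρ.length = k → c ρ ≤ f k) : extendOmitting f k s c ∈ Sk f (k + 1) :=
  ⟨sBase_extendOmitting hs.1 hfk hc, fun _ => eq_extendOmitting_of_subset hs⟩

end

theorem extend_to_Sk_succ_general
    (f : ℕ → ℕ) (k : ℕ) (hfk : 0 < f k) (s : Set (List ℕ)) (hs : s ∈ Sk f k)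
    (A : Set (List ℕ)) (hA : A ⊆ Tk f (k + 1))
    (hAs : ∀ ν ∈ A, ν.take k ∈ s)
    (hAfree : ∀ ρ ∈ s ∩ Tk f k, ∃ ℓ ≤ f k, ρ ++ [ℓ] ∉ A) :
    ∃ s' ∈ Sk f (k + 1), s ∪ A ⊆ s' := by
  choose! c hc hcA using hAfree
  have hTk : ∀ ρ ∈ s, ρ.length = k → ρ ∈ s ∩ Tk f k := fun ρ hρ hlen =>
    ⟨hρ, hlen, (hs.1.1 hρ).2⟩
  refine ⟨extendOmitting f k s c, ?_, Set.union_subset subset_extendOmitting ?_⟩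
  · exact extendOmitting_mem_Sk hs hfk fun ρ hρ hlen => hc ρ (hTk ρ hρ hlen)
  · exact subset_extendOmitting_of_avoids hA hAs fun ρ hρ hlen => hcA ρ (hTk ρ hρ hlen)

/-- For `f ∈ ℱ`, `k ≥ 1`, `s ∈ 𝒮_{f,k}` and `A ⊆ 𝒯_{f,k+1}` such that every
`ν ∈ A` restricts into `s` and no node of `s ∩ 𝒯_{f,k}` has all its immediate
successors in `A`, there is `s' ∈ 𝒮_{f,k+1}` with `s ∪ A ⊆ s'`. -/
theorem extend_to_Sk_succ
    (f : ℕ → ℕ) (hf : StrictMono f) (hf0 : ∀ k, 0 < f k)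
    (k : ℕ) (hk : 1 ≤ k) (s : Set (List ℕ)) (hs : s ∈ Sk f k)
    (A : Set (List ℕ)) (hA : A ⊆ Tk f (k + 1))
    (hAs : ∀ ν ∈ A, ν.take k ∈ s)
    (hAfree : ∀ ρ ∈ s ∩ Tk f k, ∃ ℓ ≤ f k, ρ ++ [ℓ] ∉ A) :
    ∃ s' ∈ Sk f (k + 1), s ∪ A ⊆ s' :=
  extend_to_Sk_succ_general f k (hf0 k) s hs A hA hAs hAfree
end

section
/- Let f ∈ ℱ, let j < k with k ≥ 1, let n < f(j), let ρ ∈ 𝒯_{f,j}, and let s_0, …, s_n ∈ 𝒮_{f,k} with ρ ∈ s_i for all i ≤ n. Then there exists ℓ ≤ f(j) such that ρ⌢⟨ℓ⟩ ∈ s_i for all i ≤ n. -/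
/-!
At a node `ρ` of length less than `k`, a `k`-maximal set `s` containing `ρ` omits exactly one
immediate successor. It omits one because it contains no full splitting. If it omitted both
`ρ ++ [a]` and `ρ ++ [b]`, all initial segments of a sequence of length `k` above `ρ ++ [a]` could
be added to `s`: at `ρ` the successor `ρ ++ [b]` is still missing, and a shorter node above
`ρ ++ [a]` has at least two successors (a level `i < k` with `f i = 0` would force a full
splitting in `s`), of which at most one is added. This contradicts maximality. So at most
`f (lg ρ)` such sets together omit at most `f (lg ρ)` of the `f (lg ρ) + 1` immediate successors
of `ρ`.
-/

theorem eq_of_append_singleton_prefix {α : Type*} {σ η : List α} {a b : α}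
    (ha : σ ++ [a] <+: η) (hb : σ ++ [b] <+: η) : a = b := by
  have h : σ ++ [a] = σ ++ [b] :=
    (List.prefix_of_prefix_length_le ha hb (by simp)).eq_of_length (by simp)
  simpa using h

section

variable {f : ℕ → ℕ} {k : ℕ} {s : Set (List ℕ)} {ρ η : List ℕ}

namespace inT

theorem of_prefix (hη : inT f η) (h : ρ <+: η) : inT f ρ := fun i => by
  simpa [h.getElem i.isLt] using hη ⟨i, i.isLt.trans_le h.length_le⟩

theorem append_singleton (hρ : inT f ρ) {a : ℕ} (ha : a ≤ f ρ.length) : inT f (ρ ++ [a]) := by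
  rintro ⟨i, hi⟩
  obtain hlt | rfl : i < ρ.length ∨ i = ρ.length :=
    Nat.lt_succ_iff_lt_or_eq.mp (by simpa using hi)
  · simpa [List.getElem_append_left hlt] using hρ ⟨i, hlt⟩
  · simpa using ha

theorem append_replicate_zero (hρ : inT f ρ) (m : ℕ) : inT f (ρ ++ List.replicate m 0) := by
  induction m with
  | zero => simpa using hρ
  | succ m ih =>
    rw [List.replicate_succ', ← List.append_assoc]
    exact ih.append_singleton (Nat.zero_le _)

theorem exists_mem_Tk_prefix (hρ : inT f ρ) (hk : ρ.length ≤ k) : ∃ η ∈ Tk f k, ρ <+: η :=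
  ⟨ρ ++ List.replicate (k - ρ.length) 0, ⟨by simp [hk], hρ.append_replicate_zero _⟩,
    List.prefix_append _ _⟩

end inT

namespace SBase

theorem mem_of_prefix_s9 (hs : SBase f k s) (hη : η ∈ s) (h : ρ <+: η) : ρ ∈ s :=
  hs.2.2.1 η hη ρ h

theorem exists_append_singleton_notMem (hs : SBase f k s) (hρ : ρ ∈ Tle f k) :
    ∃ ℓ ≤ f ρ.length, ρ ++ [ℓ] ∉ s := by
  simpa using hs.2.2.2.2 ρ hρ

theorem exists_mem_length_eq (hs : SBase f k s) : ∃ η ∈ s, η.length = k := by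
  obtain ⟨hsub, hne, -, hmax, -⟩ := hs
  have hbdd : BddAbove (List.length '' s) :=
    ⟨k, Set.forall_mem_image.mpr fun _ hη => (hsub hη).1⟩
  obtain ⟨η, hη, hlen⟩ := Nat.sSup_mem (hne.image _) hbdd
  refine ⟨η, hη, hmax η hη fun τ hτ h => (h.eq_of_length_le ?_).symm⟩
  exact hlen ▸ le_csSup hbdd (Set.mem_image_of_mem _ hτ)

theorem pos_of_lt (hs : SBase f k s) {i : ℕ} (hi : i < k) : 0 < f i := by
  obtain ⟨η, hη, rfl⟩ := hs.exists_mem_length_eq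
  have hηT : inT f η := (hs.1 hη).2
  have htake : (η.take i).length = i := by simp [hi.le]
  obtain ⟨ℓ, hℓ, hℓs⟩ :=
    hs.exists_append_singleton_notMem (hs.1 (hs.mem_of_prefix_s9 hη (List.take_prefix i η)))
  rw [htake] at hℓ
  have hmem : η.take i ++ [η[i]] ∈ s := by
    rw [List.take_append_getElem]
    exact hs.mem_of_prefix_s9 hη (List.take_prefix _ _)
  have hne : ℓ ≠ η[i] := fun h => hℓs (h ▸ hmem)
  have hle : η[i] ≤ f i := hηT ⟨i, hi⟩
  omega

theorem union_prefixes (hs : SBase f k s) (hη : η ∈ Tk f k)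
    (h : ∀ σ ∈ Tle f k, ∃ ℓ ≤ f σ.length, σ ++ [ℓ] ∉ s ∧ ¬ σ ++ [ℓ] <+: η) :
    SBase f k (s ∪ {τ | τ <+: η}) := by
  obtain ⟨hsub, hne, hclosed, hmax, -⟩ := hs
  obtain ⟨hlen, hηT⟩ := hη
  refine ⟨Set.union_subset hsub fun τ hτ => ⟨hlen ▸ hτ.length_le, hηT.of_prefix hτ⟩,
    hne.inl, ?_, ?_, ?_⟩
  · rintro τ (hτ | hτ) σ hσ
    · exact Or.inl (hclosed τ hτ σ hσ)
    · exact Or.inr (hσ.trans hτ)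
  · rintro τ (hτ | hτ) hτmax
    · exact hmax τ hτ fun σ hσ => hτmax σ (Or.inl hσ)
    · rw [← hτmax η (Or.inr List.prefix_rfl) hτ, hlen]
  · intro σ hσ hfull
    obtain ⟨ℓ, hℓ, hℓs, hℓη⟩ := h σ hσ
    exact (hfull ℓ hℓ).elim hℓs hℓη

theorem exists_append_singleton_notMem_not_prefix (hs : SBase f k s) (hρ : ρ ∈ s) {a b : ℕ}
    (hb : b ≤ f ρ.length) (hab : a ≠ b) (has : ρ ++ [a] ∉ s) (hbs : ρ ++ [b] ∉ s)
    (hη : η.length = k) (haη : ρ ++ [a] <+: η) {σ : List ℕ} (hσ : σ ∈ Tle f k) :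
    ∃ ℓ ≤ f σ.length, σ ++ [ℓ] ∉ s ∧ ¬ σ ++ [ℓ] <+: η := by
  obtain ⟨m, hm, hms⟩ := hs.exists_append_singleton_notMem hσ
  by_cases hmη : σ ++ [m] <+: η
  swap
  · exact ⟨m, hm, hms, hmη⟩
  suffices ∃ ℓ ≤ f σ.length, ℓ ≠ m ∧ σ ++ [ℓ] ∉ s by
    obtain ⟨ℓ, hℓ, hne, hℓs⟩ := this
    exact ⟨ℓ, hℓ, hℓs, fun hℓη => hne (eq_of_append_singleton_prefix hℓη hmη)⟩
  have hση : σ <+: η := (List.prefix_append _ _).trans hmη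
  have hρη : ρ <+: η := (List.prefix_append _ _).trans haη
  rcases lt_trichotomy σ.length ρ.length with hlt | heq | hgt
  · have hmρ : σ ++ [m] <+: ρ := List.prefix_of_prefix_length_le hmη hρη (by simpa using hlt)
    exact absurd (hs.mem_of_prefix_s9 hρ hmρ) hms
  · obtain rfl : σ = ρ := (List.prefix_of_prefix_length_le hση hρη heq.le).eq_of_length heq
    obtain rfl : a = m := eq_of_append_singleton_prefix haη hmη
    exact ⟨b, hb, hab.symm, hbs⟩
  · have haσ : ρ ++ [a] <+: σ := List.prefix_of_prefix_length_le haη hση (by simpa using hgt)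
    have hσs (ℓ : ℕ) : σ ++ [ℓ] ∉ s := fun hℓ =>
      has (hs.mem_of_prefix_s9 hℓ (haσ.trans (List.prefix_append _ _)))
    have hpos : 0 < f σ.length := hs.pos_of_lt (by simpa [hη] using hmη.length_le)
    obtain ⟨ℓ, hℓ, hne⟩ : ∃ ℓ ≤ f σ.length, ℓ ≠ m := by
      rcases eq_or_ne m 0 with rfl | hm0
      · exact ⟨1, hpos, one_ne_zero⟩
      · exact ⟨0, Nat.zero_le _, hm0.symm⟩
    exact ⟨ℓ, hℓ, hne, hσs ℓ⟩

end SBase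

namespace Sk

theorem eq_of_append_singleton_notMem (hs : s ∈ Sk f k) (hρ : ρ ∈ s) (hk : ρ.length < k) {a b : ℕ}
    (ha : a ≤ f ρ.length) (hb : b ≤ f ρ.length) (has : ρ ++ [a] ∉ s) (hbs : ρ ++ [b] ∉ s) :
    a = b := by
  by_contra hab
  obtain ⟨hbase, hmax⟩ := hs
  have haT : inT f (ρ ++ [a]) := (hbase.1 hρ).2.append_singleton ha
  obtain ⟨η, hη, haη⟩ := haT.exists_mem_Tk_prefix (k := k) (by simpa using hk)
  have hunion : SBase f k (s ∪ {τ | τ <+: η}) := hbase.union_prefixes hη fun _ hσ =>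
    hbase.exists_append_singleton_notMem_not_prefix hρ hb hab has hbs hη.1 haη hσ
  exact has (hmax _ hunion Set.subset_union_left ▸ Or.inr haη)

theorem existsUnique_append_singleton_notMem (hs : s ∈ Sk f k) (hρ : ρ ∈ s) (hk : ρ.length < k) :
    ∃! ℓ, ℓ ≤ f ρ.length ∧ ρ ++ [ℓ] ∉ s := by
  obtain ⟨ℓ, hℓ, hℓs⟩ := hs.1.exists_append_singleton_notMem (hs.1.1 hρ)
  exact ⟨ℓ, ⟨hℓ, hℓs⟩, fun m hm => eq_of_append_singleton_notMem hs hρ hk hm.1 hℓ hm.2 hℓs⟩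

end Sk

theorem common_successor_general {ι : Type*} {I : Finset ι} {k : ι → ℕ} {s : ι → Set (List ℕ)}
    (hI : I.card ≤ f ρ.length) (hs : ∀ i ∈ I, s i ∈ Sk f (k i)) (hk : ∀ i ∈ I, ρ.length < k i)
    (hρ : ∀ i ∈ I, ρ ∈ s i) : ∃ ℓ ≤ f ρ.length, ∀ i ∈ I, ρ ++ [ℓ] ∈ s i := by
  choose! omitted _ homitted using fun i hi =>
    Sk.existsUnique_append_singleton_notMem (hs i hi) (hρ i hi) (hk i hi)
  have hcard : (I.image omitted).card < (Finset.range (f ρ.length + 1)).card := by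
    rw [Finset.card_range]
    exact Nat.lt_succ_of_le (Finset.card_image_le.trans hI)
  obtain ⟨ℓ, hℓ, hℓI⟩ := Finset.exists_mem_notMem_of_card_lt_card hcard
  have hℓle : ℓ ≤ f ρ.length := Finset.mem_range_succ_iff.mp hℓ
  refine ⟨ℓ, hℓle, fun i hi => by_contra fun hℓs => hℓI ?_⟩
  exact Finset.mem_image.mpr ⟨i, hi, (homitted i hi ℓ ⟨hℓle, hℓs⟩).symm⟩

end

/-- Pigeonhole step of quantifier elimination: if `j < k`, `k ≥ 1`,
`n < f(j)`, `ρ ∈ 𝒯_{f,j}` and `s_0, …, s_n ∈ 𝒮_{f,k}` all contain `ρ`, then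
some immediate successor `ρ⌢⟨ℓ⟩` (`ℓ ≤ f(j)`) lies in every `s_i`. -/
theorem common_successor
    (f : ℕ → ℕ) (hf : StrictMono f) (hf0 : ∀ k, 0 < f k)
    (j k n : ℕ) (hk : 1 ≤ k) (hjk : j < k) (hn : n < f j)
    (ρ : List ℕ) (hρ : ρ ∈ Tk f j)
    (s : ℕ → Set (List ℕ)) (hs : ∀ i ≤ n, s i ∈ Sk f k)
    (hρs : ∀ i ≤ n, ρ ∈ s i) :
    ∃ ℓ ≤ f j, ∀ i ≤ n, ρ ++ [ℓ] ∈ s i := by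
  obtain ⟨rfl, -⟩ := hρ
  simpa using common_successor_general (I := Finset.Iic n) (k := fun _ => k) (s := s)
    (by simpa using hn) (by simpa using hs) (by simpa using fun _ _ => hjk) (by simpa using hρs)
end

section
/- Let f ∈ ℱ, let M be a model of T_{0,f}, let n < ω, let a_0, …, a_n ∈ P^M, and let k* be minimal such that f(k*) > n. Then the following are equivalent: (i) there exist a model N of T_{0,f}, an embedding ι : M → N, and an element b ∈ Q^N such that R^N(b, ι(a_i)) holds for all i ≤ n; (ii) for every j < k* and every η ∈ 𝒯_{f,j} there exists ℓ ≤ f(j) such that no a_i (i ≤ n) lies in P^M_{η⌢⟨ℓ⟩}. -/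
universe u

/-- An interpretation of the vocabulary
`τ = {P, Q, R, P_η (η ∈ 𝒯_f), Q_s (s ∈ 𝒮_f)}` on a domain `M`.
(The values of `Pn`/`Qs` off `𝒯_f`/`𝒮_f` are irrelevant.) -/
structure T0Str (M : Type u) where
  P : Set M
  Q : Set M
  Pn : List ℕ → Set M
  Qs : Set (List ℕ) → Set M
  R : M → M → Prop

/-- `S` is a model of the universal theory `T_{0,f}` (Definition 2.3). -/
def IsModelT0 (f : ℕ → ℕ) {M : Type u} (S : T0Str M) : Prop :=
  -- (a) P, Q partition M
  (S.P ∪ S.Q = Set.univ ∧ Disjoint S.P S.Q) ∧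
  -- (b) for each k, ⟨P_η : η ∈ 𝒯_{f,k}⟩ partitions P
  (∀ k, (⋃ η ∈ Tk f k, S.Pn η) = S.P ∧
    ∀ η ∈ Tk f k, ∀ η' ∈ Tk f k, η ≠ η' → Disjoint (S.Pn η) (S.Pn η')) ∧
  -- (c) for each k ≥ 1, ⟨Q_s : s ∈ 𝒮_{f,k}⟩ partitions Q
  (∀ k, 1 ≤ k → (⋃ s ∈ Sk f k, S.Qs s) = S.Q ∧
    ∀ s ∈ Sk f k, ∀ s' ∈ Sk f k, s ≠ s' → Disjoint (S.Qs s) (S.Qs s')) ∧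
  -- (d) monotonicity
  (∀ η ∈ Tf f, ∀ η' ∈ Tf f, η <+: η' → S.Pn η' ⊆ S.Pn η) ∧
  (∀ s ∈ Sf f, ∀ s' ∈ Sf f, s ⊆ s' → S.Qs s' ⊆ S.Qs s) ∧
  -- (e) R ⊆ Q × P
  (∀ b a, S.R b a → b ∈ S.Q ∧ a ∈ S.P) ∧
  -- (e) no element of Q connects into every piece of a successor partition
  (∀ k, ∀ η ∈ Tk f k, ∀ bv : ℕ → M,
    (∀ ℓ ≤ f k, bv ℓ ∈ S.Pn (η ++ [ℓ])) →
      ¬ ∃ x ∈ S.Q, ∀ ℓ ≤ f k, S.R x (bv ℓ)) ∧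
  -- (e) edges from Q_s go only into P_η with η ∈ s
  (∀ b a, S.R b a → ∀ k, 1 ≤ k → ∀ s ∈ Sk f k, b ∈ S.Qs s →
    ∀ η ∈ Tk f k, a ∈ S.Pn η → η ∈ s)

/-- An embedding of `τ`-structures: injective and preserving all atomic
formulas in both directions. -/
def IsEmb (f : ℕ → ℕ) {A B : Type u} (SA : T0Str A) (SB : T0Str B)
    (g : A → B) : Prop :=
  Function.Injective g ∧
  (∀ a, a ∈ SA.P ↔ g a ∈ SB.P) ∧
  (∀ a, a ∈ SA.Q ↔ g a ∈ SB.Q) ∧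
  (∀ η ∈ Tf f, ∀ a, a ∈ SA.Pn η ↔ g a ∈ SB.Pn η) ∧
  (∀ s ∈ Sf f, ∀ a, a ∈ SA.Qs s ↔ g a ∈ SB.Qs s) ∧
  (∀ a b, SA.R a b ↔ SB.R (g a) (g b))

section Trees

variable {f : ℕ → ℕ} {k : ℕ} {s : Set (List ℕ)} {η ρ : List ℕ}

theorem inT_append_singleton_s13 {l : ℕ} : inT f (η ++ [l]) ↔ inT f η ∧ l ≤ f η.length := by
  simp only [inT, Fin.forall_iff, List.get_eq_getElem, List.length_append, List.length_singleton,
    Nat.forall_lt_succ_right', List.getElem_concat_length]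
  refine and_congr_left' (forall₂_congr fun i hi => ?_)
  rw [List.getElem_append_left hi]

theorem append_singleton_mem_Tk {l : ℕ} (hη : η ∈ Tk f k) (hl : l ≤ f k) :
    η ++ [l] ∈ Tk f (k + 1) := by
  obtain ⟨rfl, hT⟩ := hη
  exact ⟨by simp, inT_append_singleton_s13.2 ⟨hT, hl⟩⟩

theorem inT.of_prefix_s13 (hη : inT f η) (hρ : ρ <+: η) : inT f ρ := fun i => by
  have := hη (i.castLE hρ.length_le)
  simpa [hρ.getElem] using this

theorem SBase.nil_mem (hs : SBase f k s) : [] ∈ s :=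
  let ⟨η, hη⟩ := hs.2.1
  hs.2.2.1 η hη [] List.nil_prefix

theorem SBase.exists_append_singleton_mem (hs : SBase f k s) (hρ : ρ ∈ s) (hk : ρ.length < k) :
    ∃ l, ρ ++ [l] ∈ s := by
  obtain ⟨-, -, hprefix, hmax, -⟩ := hs
  obtain ⟨η, hη, ⟨t, rfl⟩, hne⟩ : ∃ η ∈ s, ρ <+: η ∧ η ≠ ρ := by
    by_contra! h
    exact hk.ne (hmax ρ hρ h)
  cases t with
  | nil => simp at hne
  | cons l t => exact ⟨l, hprefix _ hη _ ⟨t, by simp⟩⟩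

theorem SBase.inter_Tle {k' : ℕ} (hs : SBase f k' s) (hk : k ≤ k') : SBase f k (s ∩ Tle f k) := by
  refine ⟨Set.inter_subset_right, ⟨[], hs.nil_mem, Nat.zero_le k, (hs.1 hs.nil_mem).2⟩, ?_, ?_, ?_⟩
  · rintro η ⟨hη, hlen, hT⟩ ρ hρ
    exact ⟨hs.2.2.1 η hη ρ hρ, hρ.length_le.trans hlen, hT.of_prefix_s13 hρ⟩
  · rintro ρ ⟨hρ, hlen, -⟩ hmax
    by_contra hne
    have hlt : ρ.length < k := lt_of_le_of_ne hlen hne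
    obtain ⟨l, hl⟩ := hs.exists_append_singleton_mem hρ (hlt.trans_le hk)
    have := hmax (ρ ++ [l]) ⟨hl, by simpa using hlt, (hs.1 hl).2⟩ (List.prefix_append _ _)
    simp at this
  · intro ρ hρ hfull
    exact hs.2.2.2.2 ρ ⟨hρ.1.trans hk, hρ.2⟩ fun l hl => (hfull l hl).1

theorem eq_of_mem_limS_of_subset {ν : ℕ → Set (List ℕ)} {m : ℕ} (hν : ν ∈ limS f) (hk : 1 ≤ k)
    (hm : 1 ≤ m) (hs : s ∈ Sk f k) (hsub : s ⊆ ν m) : s = ν k := by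
  suffices s ⊆ ν k from (hs.2 _ (hν.1 k hk).1 this).symm
  rcases lt_or_ge m k with hlt | hle
  · exact hsub.trans (hν.2 m k hm hlt)
  · have hmono : ν k ⊆ ν m := hle.eq_or_lt.elim (fun h => h ▸ subset_rfl) (hν.2 k m hk)
    -- The truncation of `ν m` at level `k` contains `ν k`, so it is `ν k` by maximality.
    have htrunc : ν m ∩ Tle f k = ν k :=
      (hν.1 k hk).2 _ ((hν.1 m hm).1.inter_Tle hle)
        (Set.subset_inter hmono (hν.1 k hk).1.1)
    exact htrunc ▸ Set.subset_inter hsub hs.1.1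

end Trees

section AvoidTree

/-- The tree of all `η ∈ 𝒯_{f,[k]}` no initial segment of which is of the form `ρ⌢⟨o(ρ)⟩`. It is the
`k`-maximal set obtained by forbidding, at each node `ρ`, the single successor number `o(ρ)`. -/
def avoidTree (f : ℕ → ℕ) (o : List ℕ → ℕ) (k : ℕ) : Set (List ℕ) :=
  {η ∈ Tle f k | ∀ ρ, ¬ ρ ++ [o ρ] <+: η}

variable {f : ℕ → ℕ} {o : List ℕ → ℕ} {k : ℕ}

theorem nil_mem_avoidTree : [] ∈ avoidTree f o k :=
  ⟨⟨Nat.zero_le k, fun i => i.elim0⟩, by simp⟩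

theorem append_singleton_mem_avoidTree {η : List ℕ} {l : ℕ} :
    η ++ [l] ∈ avoidTree f o k ↔
      η ∈ avoidTree f o k ∧ η.length < k ∧ l ≤ f η.length ∧ l ≠ o η := by
  have hchoice : (∀ ρ, ρ ++ [o ρ] ≠ η ++ [l]) ↔ l ≠ o η := by
    simp only [ne_eq, List.append_singleton_inj, not_and]
    exact ⟨fun h hl => h η rfl hl.symm, fun h ρ hρ hl => h (hρ ▸ hl.symm)⟩
  simp only [avoidTree, Tle, Set.mem_ofPred_eq, inT_append_singleton_s13, List.length_append,
    List.length_singleton, List.prefix_concat_iff, not_or, forall_and, ← ne_eq, hchoice]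
  grind

theorem sBase_avoidTree (hf0 : ∀ k, 0 < f k) (ho : ∀ ρ ∈ Tf f, o ρ ≤ f ρ.length) (k : ℕ) :
    SBase f k (avoidTree f o k) := by
  refine ⟨fun η hη => hη.1, ⟨[], nil_mem_avoidTree⟩, ?_, ?_, ?_⟩
  · rintro η ⟨⟨hlen, hT⟩, hη⟩ ρ hρ
    exact ⟨⟨hρ.length_le.trans hlen, hT.of_prefix_s13 hρ⟩, fun σ hσ => hη σ (hσ.trans hρ)⟩
  · intro ρ hρ hmax
    by_contra hne
    obtain ⟨l, hl, hlo⟩ : ∃ l ≤ f ρ.length, l ≠ o ρ := by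
      by_cases h0 : o ρ = 0
      · exact ⟨1, hf0 _, by simp [h0]⟩
      · exact ⟨0, Nat.zero_le _, Ne.symm h0⟩
    have := hmax (ρ ++ [l])
      (append_singleton_mem_avoidTree.2 ⟨hρ, lt_of_le_of_ne hρ.1.1 hne, hl, hlo⟩)
      (List.prefix_append _ _)
    simp at this
  · intro ρ hρ hfull
    exact (append_singleton_mem_avoidTree.1 (hfull (o ρ) (ho ρ hρ.2))).2.2.2 rfl

theorem avoidTree_mem_Sk (hf0 : ∀ k, 0 < f k) (ho : ∀ ρ ∈ Tf f, o ρ ≤ f ρ.length) (k : ℕ) :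
    avoidTree f o k ∈ Sk f k := by
  refine ⟨sBase_avoidTree hf0 ho k, fun s hs hsub => subset_antisymm (fun η => ?_) hsub⟩
  induction η using List.reverseRecOn with
  | nil => exact fun _ => nil_mem_avoidTree
  | append_singleton ρ l ih =>
    intro h
    have hρ : ρ ∈ avoidTree f o k := ih (hs.2.2.1 _ h ρ (List.prefix_append _ _))
    obtain ⟨hlen, hT⟩ := hs.1 h
    have hlt : ρ.length < k := by simpa using hlen
    refine append_singleton_mem_avoidTree.2 ⟨hρ, hlt, (inT_append_singleton_s13.1 hT).2, ?_⟩
    -- Otherwise `s` would contain the full splitting of `ρ`.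
    rintro rfl
    refine hs.2.2.2.2 ρ hρ.1 fun m hm => ?_
    by_cases hmo : m = o ρ
    · exact hmo ▸ h
    · exact hsub (append_singleton_mem_avoidTree.2 ⟨hρ, hlt, hm, hmo⟩)

theorem avoidTree_mem_limS (hf0 : ∀ k, 0 < f k) (ho : ∀ ρ ∈ Tf f, o ρ ≤ f ρ.length) :
    avoidTree f o ∈ limS f :=
  ⟨fun k _ => avoidTree_mem_Sk hf0 ho k,
    fun _ _ _ hk _ hη => ⟨⟨hη.1.1.trans hk.le, hη.1.2⟩, hη.2⟩⟩

end AvoidTree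

section Models

variable {f : ℕ → ℕ} {M : Type u} {S : T0Str M} {A : Set M}

/-- The axiom on splittings in (e) follows from (c) and the axiom on edges from `Q_s`, because no
`s ∈ 𝒮_f` contains a full splitting. -/
theorem not_forall_R_of_Q_subset (hQ : ∀ k, 1 ≤ k → S.Q ⊆ ⋃ s ∈ Sk f k, S.Qs s)
    (hR : ∀ b a, S.R b a → ∀ k, 1 ≤ k → ∀ s ∈ Sk f k, b ∈ S.Qs s →
      ∀ η ∈ Tk f k, a ∈ S.Pn η → η ∈ s)
    {k : ℕ} {η : List ℕ} (hη : η ∈ Tk f k) {c : ℕ → M}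
    (hc : ∀ ℓ ≤ f k, c ℓ ∈ S.Pn (η ++ [ℓ])) : ¬ ∃ x ∈ S.Q, ∀ ℓ ≤ f k, S.R x (c ℓ) := by
  rintro ⟨x, hx, hxc⟩
  obtain ⟨s, hs, hxs⟩ := Set.mem_iUnion₂.1 (hQ (k + 1) k.succ_pos hx)
  refine hs.1.2.2.2.2 η ⟨hη.1.le.trans k.le_succ, hη.2⟩ fun ℓ hℓ => ?_
  rw [hη.1] at hℓ
  exact hR x (c ℓ) (hxc ℓ hℓ) (k + 1) k.succ_pos s hs hxs _ (append_singleton_mem_Tk hη hℓ)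
    (hc ℓ hℓ)

theorem IsModelT0.exists_disjoint_of_forall_R (hS : IsModelT0 f S) {b : M}
    (hb : ∀ x ∈ A, S.R b x) {k : ℕ} {η : List ℕ} (hη : η ∈ Tk f k) :
    ∃ ℓ ≤ f k, Disjoint A (S.Pn (η ++ [ℓ])) := by
  obtain ⟨-, -, -, -, -, hRQP, hsplit, -⟩ := hS
  by_contra! hmeet
  simp only [Set.not_disjoint_iff] at hmeet
  have : Nonempty M := ⟨b⟩
  choose! c hcA hcP using hmeet
  exact hsplit k η hη c hcP
    ⟨b, (hRQP b (c 0) (hb _ (hcA 0 (Nat.zero_le _)))).1, fun ℓ hℓ => hb _ (hcA ℓ hℓ)⟩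

theorem encard_Iic (n : ℕ) : (Set.Iic n).encard = n + 1 := by
  rw [← Finset.coe_Iic, Set.encard_coe_eq_coe_finsetCard, Nat.card_Iic, Nat.cast_succ]

theorem encard_image_Iic_le {α : Type*} (a : ℕ → α) {n m : ℕ} (h : n < m) :
    (a '' Set.Iic n).encard ≤ m :=
  (Set.encard_image_le a _).trans ((encard_Iic n).trans_le (by exact_mod_cast h))

theorem exists_disjoint_of_encard_lt {α ι : Type*} {A : Set α} {I : Set ι} {B : ι → Set α}
    (hB : I.PairwiseDisjoint B) (hcard : A.encard < I.encard) : ∃ i ∈ I, Disjoint A (B i) := by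
  by_contra! hmeet
  simp only [Set.not_disjoint_iff] at hmeet
  obtain ⟨i₀, hi₀⟩ : I.Nonempty := Set.encard_pos.1 (bot_le.trans_lt hcard)
  have : Nonempty α := ⟨(hmeet i₀ hi₀).choose⟩
  choose! g hgA hgB using hmeet
  obtain ⟨i, hi, j, hj, hij, hg⟩ := Set.exists_ne_map_eq_of_encard_lt_of_maps_to hcard hgA
  exact Set.disjoint_left.1 (hB hi hj hij) (hgB i hi) (hg ▸ hgB j hj)

theorem IsModelT0.exists_disjoint_of_encard_le (hS : IsModelT0 f S) {k : ℕ} (hA : A.encard ≤ f k)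
    {η : List ℕ} (hη : η ∈ Tk f k) : ∃ ℓ ≤ f k, Disjoint A (S.Pn (η ++ [ℓ])) := by
  refine exists_disjoint_of_encard_lt (I := Set.Iic (f k)) (B := fun ℓ => S.Pn (η ++ [ℓ]))
    (fun i hi j hj hij => ?_) (hA.trans_lt ?_)
  · exact (hS.2.1 (k + 1)).2 _ (append_singleton_mem_Tk hη hi) _ (append_singleton_mem_Tk hη hj)
      (by simpa using hij)
  · rw [encard_Iic]
    exact_mod_cast Nat.lt_succ_self (f k)

theorem IsModelT0.mem_avoidTree (hS : IsModelT0 f S) {o : List ℕ → ℕ}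
    (ho : ∀ ρ ∈ Tf f, Disjoint A (S.Pn (ρ ++ [o ρ]))) {x : M} (hx : x ∈ A) {k : ℕ} {η : List ℕ}
    (hη : η ∈ Tk f k) (hxη : x ∈ S.Pn η) : η ∈ avoidTree f o k := by
  obtain ⟨-, -, -, hmono, -⟩ := hS
  refine ⟨⟨hη.1.le, hη.2⟩, fun ρ hρ => ?_⟩
  have hT : ρ ++ [o ρ] ∈ Tf f := hη.2.of_prefix_s13 hρ
  exact Set.disjoint_left.1 (ho ρ (inT_append_singleton_s13.1 hT).1) hx
    (hmono _ hT η hη.2 hρ hxη)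

end Models

section OnePointExtension

/-- The extension of `S` by one new element `none` of `Q`, joined by `R` to exactly the points of
`A`. The predicates `Q_s` that hold at `none` are those along `ν`, which is meant to be a branch in
`lim(𝒮_f)`; its value at `0` is ignored, as in `limS`. -/
def T0Str.adjoinQ {M : Type u} (S : T0Str M) (ν : ℕ → Set (List ℕ)) (A : Set M) :
    T0Str (Option M) where
  P := some '' S.P
  Q := insert none (some '' S.Q)
  Pn η := some '' S.Pn η
  Qs s := {x | x = none ∧ ∃ k, 1 ≤ k ∧ s = ν k} ∪ some '' S.Qs s
  R
    | none, some a => a ∈ A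
    | some b, some a => S.R b a
    | _, none => False

variable {f : ℕ → ℕ} {M : Type u} {S : T0Str M} {ν : ℕ → Set (List ℕ)} {A : Set M}

theorem isEmb_some_adjoinQ : IsEmb f S (S.adjoinQ ν A) some := by
  refine ⟨Option.some_injective M, ?_, ?_, ?_, ?_, fun _ _ => Iff.rfl⟩ <;> simp [T0Str.adjoinQ]

theorem none_mem_adjoinQ_Qs_iff (hν : ν ∈ limS f) {k : ℕ} (hk : 1 ≤ k) {s : Set (List ℕ)}
    (hs : s ∈ Sk f k) : none ∈ (S.adjoinQ ν A).Qs s ↔ s = ν k := by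
  simp only [T0Str.adjoinQ, Set.mem_union, Set.mem_ofPred_eq, true_and, Set.mem_image, reduceCtorEq,
    and_false, exists_false, or_false]
  refine ⟨?_, fun h => ⟨k, hk, h⟩⟩
  rintro ⟨k', hk', h⟩
  exact eq_of_mem_limS_of_subset hν hk hk' hs h.subset

theorem some_mem_adjoinQ_Qs_iff {s : Set (List ℕ)} {x : M} :
    some x ∈ (S.adjoinQ ν A).Qs s ↔ x ∈ S.Qs s := by
  simp [T0Str.adjoinQ]

theorem IsModelT0.adjoinQ_Qs_partition (hS : IsModelT0 f S) (hν : ν ∈ limS f) {k : ℕ}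
    (hk : 1 ≤ k) :
    (⋃ s ∈ Sk f k, (S.adjoinQ ν A).Qs s) = (S.adjoinQ ν A).Q ∧
      ∀ s ∈ Sk f k, ∀ s' ∈ Sk f k, s ≠ s' →
        Disjoint ((S.adjoinQ ν A).Qs s) ((S.adjoinQ ν A).Qs s') := by
  obtain ⟨hcover, hdisj⟩ := hS.2.2.1 k hk
  refine ⟨?_, fun s hs s' hs' hne => Set.disjoint_left.2 ?_⟩
  · ext (_ | x)
    · simp only [Set.mem_iUnion₂]
      exact ⟨fun _ => Set.mem_insert _ _,
        fun _ => ⟨ν k, hν.1 k hk, (none_mem_adjoinQ_Qs_iff hν hk (hν.1 k hk)).2 rfl⟩⟩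
    · simp only [Set.mem_iUnion₂, some_mem_adjoinQ_Qs_iff]
      simpa [T0Str.adjoinQ] using Set.ext_iff.1 hcover x
  · rintro (_ | x) hx hx'
    · exact hne (((none_mem_adjoinQ_Qs_iff hν hk hs).1 hx).trans
        ((none_mem_adjoinQ_Qs_iff hν hk hs').1 hx').symm)
    · exact Set.disjoint_left.1 (hdisj s hs s' hs' hne) (some_mem_adjoinQ_Qs_iff.1 hx)
        (some_mem_adjoinQ_Qs_iff.1 hx')

theorem IsModelT0.adjoinQ_Qs_anti (hS : IsModelT0 f S) (hν : ν ∈ limS f) {s s' : Set (List ℕ)}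
    (hs : s ∈ Sf f) (hs' : s' ∈ Sf f) (hsub : s ⊆ s') :
    (S.adjoinQ ν A).Qs s' ⊆ (S.adjoinQ ν A).Qs s := by
  obtain ⟨-, -, -, -, hanti, -⟩ := hS
  rintro (_ | x) hx
  · obtain ⟨k, hk, hsk⟩ := hs
    obtain ⟨k', hk', hsk'⟩ := hs'
    rw [none_mem_adjoinQ_Qs_iff hν hk' hsk'] at hx
    rw [none_mem_adjoinQ_Qs_iff hν hk hsk]
    exact eq_of_mem_limS_of_subset hν hk hk' hsk (hx ▸ hsub)
  · exact some_mem_adjoinQ_Qs_iff.2 (hanti s hs s' hs' hsub (some_mem_adjoinQ_Qs_iff.1 hx))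

theorem IsModelT0.mem_of_adjoinQ_R (hS : IsModelT0 f S) (hν : ν ∈ limS f)
    (hAν : ∀ k, 1 ≤ k → ∀ η ∈ Tk f k, ∀ x ∈ A, x ∈ S.Pn η → η ∈ ν k) {b a : Option M}
    (hR : (S.adjoinQ ν A).R b a) {k : ℕ} (hk : 1 ≤ k) {s : Set (List ℕ)} (hs : s ∈ Sk f k)
    (hb : b ∈ (S.adjoinQ ν A).Qs s) {η : List ℕ} (hη : η ∈ Tk f k)
    (ha : a ∈ (S.adjoinQ ν A).Pn η) : η ∈ s := by
  obtain ⟨-, -, -, -, -, -, -, hRs⟩ := hS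
  obtain ⟨a, ha, rfl⟩ := ha
  rcases b with _ | b
  · rw [(none_mem_adjoinQ_Qs_iff hν hk hs).1 hb]
    exact hAν k hk η hη a hR ha
  · exact hRs b a hR k hk s hs (some_mem_adjoinQ_Qs_iff.1 hb) η hη ha

theorem IsModelT0.adjoinQ (hS : IsModelT0 f S) (hν : ν ∈ limS f) (hA : A ⊆ S.P)
    (hAν : ∀ k, 1 ≤ k → ∀ η ∈ Tk f k, ∀ x ∈ A, x ∈ S.Pn η → η ∈ ν k) :
    IsModelT0 f (S.adjoinQ ν A) := by
  have hQs k (hk : 1 ≤ k) := hS.adjoinQ_Qs_partition (A := A) hν hk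
  have hRs b a (hR : (S.adjoinQ ν A).R b a) k (hk : 1 ≤ k) s (hs : s ∈ Sk f k)
      (hb : b ∈ (S.adjoinQ ν A).Qs s) η (hη : η ∈ Tk f k) (ha : a ∈ (S.adjoinQ ν A).Pn η) : η ∈ s :=
    hS.mem_of_adjoinQ_R hν hAν hR hk hs hb hη ha
  have hQs_anti s (hs : s ∈ Sf f) s' (hs' : s' ∈ Sf f) (hsub : s ⊆ s') :=
    hS.adjoinQ_Qs_anti (A := A) hν hs hs' hsub
  obtain ⟨⟨hPQ, hPQ_disj⟩, hPn, -, hPn_mono, -, hRQP, -, -⟩ := hS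
  refine ⟨⟨?_, ?_⟩, fun k => ⟨?_, fun η hη η' hη' hne => ?_⟩, hQs,
    fun η hη η' hη' hp => Set.image_mono (hPn_mono η hη η' hη' hp), hQs_anti, ?_,
    fun k η hη c hc => not_forall_R_of_Q_subset (fun k hk => (hQs k hk).1.superset) hRs hη hc, hRs⟩
  · simp only [T0Str.adjoinQ]
    rw [Set.union_insert, ← Set.image_union, hPQ, Set.image_univ, Set.insert_none_range_some]
  · simpa [T0Str.adjoinQ, Set.disjoint_image_iff (Option.some_injective M)] using hPQ_disj
  · simp only [T0Str.adjoinQ, ← Set.image_iUnion₂, (hPn k).1]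
  · exact (Set.disjoint_image_iff (Option.some_injective M)).2 ((hPn k).2 η hη η' hη' hne)
  · rintro (_ | b) (_ | a) hR
    · exact hR.elim
    · exact ⟨Set.mem_insert _ _, Set.mem_image_of_mem _ (hA hR)⟩
    · exact hR.elim
    · obtain ⟨hb, ha⟩ := hRQP b a hR
      exact ⟨.inr (Set.mem_image_of_mem _ hb), Set.mem_image_of_mem _ ha⟩

end OnePointExtension

/-- The levels outside `J` are those where the pigeonhole principle applies: `J = Set.univ` covers
arbitrary `A`, and `J = {j | j < k*}` covers `|A| ≤ n + 1`. -/
theorem qe_case_a_general {f : ℕ → ℕ} (hf0 : ∀ k, 0 < f k) {M : Type u} {SM : T0Str M}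
    (hM : IsModelT0 f SM) {A : Set M} (hA : A ⊆ SM.P) {J : Set ℕ}
    (hJ : ∀ j ∉ J, A.encard ≤ f j) :
    (∃ (N : Type u) (SN : T0Str N) (ι : M → N),
        IsModelT0 f SN ∧ IsEmb f SM SN ι ∧ ∃ b ∈ SN.Q, ∀ x ∈ A, SN.R b (ι x)) ↔
      ∀ j ∈ J, ∀ η ∈ Tk f j, ∃ ℓ ≤ f j, Disjoint A (SM.Pn (η ++ [ℓ])) := by
  constructor
  · rintro ⟨N, SN, ι, hN, ⟨-, -, -, hPn, -, -⟩, b, -, hb⟩ j - η hη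
    obtain ⟨ℓ, hℓ, hdisj⟩ := hN.exists_disjoint_of_forall_R (Set.forall_mem_image.2 hb) hη
    refine ⟨ℓ, hℓ, Set.disjoint_left.2 fun x hx hxP => ?_⟩
    exact Set.disjoint_left.1 hdisj (Set.mem_image_of_mem ι hx)
      ((hPn _ (append_singleton_mem_Tk hη hℓ).2 x).1 hxP)
  · intro h
    have hfree : ∀ ρ ∈ Tf f, ∃ ℓ ≤ f ρ.length, Disjoint A (SM.Pn (ρ ++ [ℓ])) := by
      intro ρ hρ
      by_cases hj : ρ.length ∈ J
      · exact h _ hj ρ ⟨rfl, hρ⟩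
      · exact hM.exists_disjoint_of_encard_le (hJ _ hj) ⟨rfl, hρ⟩
    choose! o ho hdisj using hfree
    exact ⟨Option M, SM.adjoinQ (avoidTree f o) A, some,
      hM.adjoinQ (avoidTree_mem_limS hf0 ho) hA fun k _ η hη x hx hxη =>
        hM.mem_avoidTree hdisj hx hη hxη,
      isEmb_some_adjoinQ, none, Set.mem_insert _ _, fun x hx => hx⟩

/-- **Case (a) of quantifier elimination (Claim 2.5)**, as a one-point
extension criterion.  Let `M ⊨ T_{0,f}`, `a_0, …, a_n ∈ P^M`, and `k*`
minimal with `f(k*) > n`.  Then the following are equivalent: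
(i) in some extension `N ⊨ T_{0,f}` of `M` there is `b ∈ Q^N` with
`R^N(b, a_i)` for all `i ≤ n`;
(ii) for every `j < k*` and every `η ∈ 𝒯_{f,j}` there is `ℓ ≤ f(j)` such
that no `a_i` lies in `P^M_{η⌢⟨ℓ⟩}`. -/
theorem qe_case_a
    (f : ℕ → ℕ) (hf : StrictMono f) (hf0 : ∀ k, 0 < f k)
    (M : Type u) (SM : T0Str M) (hM : IsModelT0 f SM)
    (n : ℕ) (a : ℕ → M) (ha : ∀ i ≤ n, a i ∈ SM.P)
    (kstar : ℕ) (hk1 : n < f kstar) (hk2 : ∀ j < kstar, f j ≤ n) :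
    (∃ (N : Type u) (SN : T0Str N) (ι : M → N),
        IsModelT0 f SN ∧ IsEmb f SM SN ι ∧
        ∃ b ∈ SN.Q, ∀ i ≤ n, SN.R b (ι (a i))) ↔
    (∀ j < kstar, ∀ η ∈ Tk f j, ∃ ℓ ≤ f j,
        ∀ i ≤ n, a i ∉ SM.Pn (η ++ [ℓ])) := by
  simpa only [Set.mem_Iio, Set.disjoint_left, Set.forall_mem_image, Set.mem_Iic] using
    qe_case_a_general hf0 hM (A := a '' Set.Iic n) (Set.image_subset_iff.2 ha) (J := Set.Iio kstar)
      fun j hj => encard_image_Iic_le a (hk1.trans_le (hf.monotone (not_lt.1 hj)))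
end
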